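/- Let $R_1$ be a commutative local ring with unity having two distinct units $u_1, u_2$ and a non-zero element $a$ of its maximal ideal, and let $F$ be a field with $|F| \geq 13$, with twelve distinct units $v_1, \ldots, v_{12}$. Then $\Gamma'(R_1 \times F)$ contains $K_{3,12}$ as a subgraph, with parts $\{(u_1,0), (u_2,0), (a,0)\}$ and $\{(0,v_j) : 1 \leq j \leq 12\}$. -/

import Mathlib

/-- Adjacency in the cozero-divisor graph `Γ'(R)`: both elements are vertices
(non-zero non-units) and neither lies in the principal ideal generated by the
other. -/
def cozeroAdj {R : Type*} [CommRing R] (x y : R) : Prop :=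
  (x ≠ 0 ∧ ¬ IsUnit x) ∧ (y ≠ 0 ∧ ¬ IsUnit y) ∧
    x ∉ Ideal.span {y} ∧ y ∉ Ideal.span {x}

/-!
Adjacency in `Γ'(R)` is incomparability for divisibility: zero is divisible by every element and a
unit divides every element, so neither can be incomparable to anything. In `R × S`, a divisibility
between `(x, 0)` and `(0, y)` forces `x = 0` or `y = 0`.
-/

section

variable {R S : Type*} [CommRing R] [CommRing S]

theorem cozeroAdj_iff_not_dvd {x y : R} : cozeroAdj x y ↔ ¬ y ∣ x ∧ ¬ x ∣ y := by
  simp only [cozeroAdj, Ideal.mem_span_singleton]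
  constructor
  · rintro ⟨-, -, hyx, hxy⟩
    exact ⟨hyx, hxy⟩
  · rintro ⟨hyx, hxy⟩
    have hx : x ≠ 0 ∧ ¬ IsUnit x := ⟨fun h => hyx (h ▸ dvd_zero y), fun h => hxy h.dvd⟩
    have hy : y ≠ 0 ∧ ¬ IsUnit y := ⟨fun h => hxy (h ▸ dvd_zero x), fun h => hyx h.dvd⟩
    exact ⟨hx, hy, hyx, hxy⟩

theorem cozeroAdj.ne {x y : R} (h : cozeroAdj x y) : x ≠ y :=
  fun hxy => (cozeroAdj_iff_not_dvd.mp h).2 hxy.dvd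

theorem cozeroAdj_mk_zero_zero_mk_iff {x : R} {y : S} :
    cozeroAdj (x, (0 : S)) ((0 : R), y) ↔ x ≠ 0 ∧ y ≠ 0 := by
  simp only [cozeroAdj_iff_not_dvd, prod_dvd_iff, zero_dvd_iff, dvd_zero, and_true, true_and, ne_eq]

theorem stmt9_general {ι κ : Type*} {x : ι → R} {y : κ → S}
    (hx : Function.Injective x) (hx0 : ∀ i, x i ≠ 0)
    (hy : Function.Injective y) (hy0 : ∀ j, y j ≠ 0) :
    Function.Injective (fun i => (x i, (0 : S))) ∧ Function.Injective (fun j => ((0 : R), y j)) ∧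
      (∀ i j, (x i, (0 : S)) ≠ ((0 : R), y j)) ∧
      ∀ i j, cozeroAdj (x i, (0 : S)) ((0 : R), y j) := by
  have hadj : ∀ i j, cozeroAdj (x i, (0 : S)) ((0 : R), y j) :=
    fun i j => cozeroAdj_mk_zero_zero_mk_iff.mpr ⟨hx0 i, hy0 j⟩
  exact ⟨(Prod.mk_left_injective 0).comp hx, (Prod.mk_right_injective 0).comp hy,
    fun i j => (hadj i j).ne, hadj⟩

end

theorem injective_vec_three_iff {α : Type*} {a b c : α} :
    Function.Injective ![a, b, c] ↔ a ≠ b ∧ a ≠ c ∧ b ≠ c := by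
  simp only [Matrix.vecCons, Fin.cons_injective_iff]
  simp [and_left_comm, and_assoc, Function.injective_of_subsingleton]

theorem ne_of_isUnit_of_mem_maximalIdeal {R : Type*} [CommRing R] [IsLocalRing R] {u a : R}
    (hu : IsUnit u) (ha : a ∈ IsLocalRing.maximalIdeal R) : u ≠ a :=
  (ne_of_mem_of_not_mem ha (IsLocalRing.notMem_maximalIdeal.mpr hu)).symm

/-- Let `R₁` be a commutative local ring with two distinct units `u₁, u₂` and a
non-zero element `a` of its maximal ideal, and let `F` be a field with
`|F| ≥ 13` and twelve distinct units `v₁, …, v₁₂`.  Then `Γ'(R₁ × F)` contains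
`K_{3,12}` as a subgraph with the indicated parts. -/
theorem stmt9 (R₁ F : Type*) [CommRing R₁] [IsLocalRing R₁] [Field F]
    (u₁ u₂ : R₁) (hu₁ : IsUnit u₁) (hu₂ : IsUnit u₂) (hu : u₁ ≠ u₂)
    (a : R₁) (ha : a ∈ IsLocalRing.maximalIdeal R₁) (ha0 : a ≠ 0)
    (hF : 13 ≤ Cardinal.mk F)
    (v : Fin 12 → F) (hv : Function.Injective v) (hvu : ∀ j, IsUnit (v j))
    (A : Fin 3 → R₁ × F) (B : Fin 12 → R₁ × F)
    (hA : A = ![(u₁, 0), (u₂, 0), (a, 0)])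
    (hB : B = fun j => ((0 : R₁), v j)) :
    Function.Injective A ∧ Function.Injective B ∧ (∀ i j, A i ≠ B j) ∧
      ∀ i j, cozeroAdj (A i) (B j) := by
  have hx : Function.Injective ![u₁, u₂, a] := injective_vec_three_iff.mpr
    ⟨hu, ne_of_isUnit_of_mem_maximalIdeal hu₁ ha, ne_of_isUnit_of_mem_maximalIdeal hu₂ ha⟩
  have hx0 : ∀ i, ![u₁, u₂, a] i ≠ 0 := by
    simp [Fin.forall_fin_succ, hu₁.ne_zero, hu₂.ne_zero, ha0]
  have hA_eq : A = fun i => (![u₁, u₂, a] i, (0 : F)) := by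
    rw [hA]
    ext i <;> fin_cases i <;> rfl
  rw [hA_eq, hB]
  exact stmt9_general hx hx0 hv fun j => (hvu j).ne_zero
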